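/- Let β ∈ ℕ₀, ε ∈ (0,2) and c > 0. Then there exists a constant C > 0, depending only on β, c and ε, such that for all α, n ∈ ℕ₀ with 1 ≤ α ≤ c(1+n) and all x ∈ [−1+ε, 1], | ((1−x)/2)^{α/2} P_n^{(α,β)}(x) | ≤ C ( u² |x − x_tr| + α^{4/3} )^{−1/4}, where u := n + (α+β+1)/2 and x_tr := 1 − α²/(2u²). -/

import Mathlib

/-- Generalized binomial coefficient `C(t, j) = t(t-1)⋯(t-j+1)/j!`. -/
noncomputable def genChoose (t : ℝ) (j : ℕ) : ℝ :=
  (∏ i ∈ Finset.range j, (t - (i : ℝ))) / (Nat.factorial j : ℝ)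

/-- Jacobi polynomial
`P_n^{(α,β)}(x) = ∑_{s=0}^n C(n+α, n-s) C(n+β, s) ((x-1)/2)^s ((x+1)/2)^{n-s}`. -/
noncomputable def jacobi (α β : ℝ) (n : ℕ) (x : ℝ) : ℝ :=
  ∑ s ∈ Finset.range (n + 1),
    genChoose ((n : ℝ) + α) (n - s) * genChoose ((n : ℝ) + β) s *
      ((x - 1) / 2) ^ s * ((x + 1) / 2) ^ (n - s)

/-- The product `((x - 1) / 2) ^ s * ((x + 1) / 2) ^ m`. -/
noncomputable def jacobiMonomial (s m : ℕ) (x : ℝ) : ℝ := ((x - 1) / 2) ^ s * ((x + 1) / 2) ^ m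

/-- The formal derivative of `jacobiMonomial`. -/
noncomputable def jacobiMonomialDeriv (s m : ℕ) (x : ℝ) : ℝ :=
  (s * jacobiMonomial (s - 1) m x + m * jacobiMonomial s (m - 1) x) / 2

/-- The formal second derivative of `jacobiMonomial`. -/
noncomputable def jacobiMonomialDeriv₂ (s m : ℕ) (x : ℝ) : ℝ :=
  (s * jacobiMonomialDeriv (s - 1) m x + m * jacobiMonomialDeriv s (m - 1) x) / 2

lemma hasDerivAt_jacobiMonomial (s m : ℕ) (x : ℝ) :
    HasDerivAt (jacobiMonomial s m) (jacobiMonomialDeriv s m x) x := by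
  have hA : HasDerivAt (fun x : ℝ => (x - 1) / 2) (1 / 2) x :=
    ((hasDerivAt_id x).sub_const 1).div_const 2
  have hB : HasDerivAt (fun x : ℝ => (x + 1) / 2) (1 / 2) x :=
    ((hasDerivAt_id x).add_const 1).div_const 2
  refine ((hA.fun_pow s).fun_mul (hB.fun_pow m)).congr_deriv ?_
  simp only [jacobiMonomialDeriv, jacobiMonomial]
  ring

lemma hasDerivAt_jacobiMonomialDeriv (s m : ℕ) (x : ℝ) :
    HasDerivAt (jacobiMonomialDeriv s m) (jacobiMonomialDeriv₂ s m x) x :=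
  (((hasDerivAt_jacobiMonomial (s - 1) m x).const_mul (s : ℝ)).add
    ((hasDerivAt_jacobiMonomial s (m - 1) x).const_mul (m : ℝ))).div_const 2

lemma jacobiMonomial_ode (α β : ℝ) (s m : ℕ) (x : ℝ) :
    (1 - x ^ 2) * jacobiMonomialDeriv₂ s m x
      + (β - α - (α + β + 2) * x) * jacobiMonomialDeriv s m x
      + ((s + m : ℕ) : ℝ) * ((s + m : ℕ) + α + β + 1) * jacobiMonomial s m x
      = m * (m + β) * jacobiMonomial s (m - 1) x - s * (s + α) * jacobiMonomial (s - 1) m x := by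
  obtain ⟨y, rfl⟩ : ∃ y, x = 2 * y + 1 := ⟨(x - 1) / 2, by ring⟩
  have h₁ : (2 * y + 1 - 1) / 2 = y := by ring
  have h₂ : (2 * y + 1 + 1) / 2 = y + 1 := by ring
  simp only [jacobiMonomialDeriv₂, jacobiMonomialDeriv, jacobiMonomial, h₁, h₂]
  rcases s with _ | _ | s <;> rcases m with _ | _ | m <;>
    simp only [Nat.add_sub_cancel, Nat.zero_sub, zero_add, Nat.sub_self, Nat.reduceAdd,
      show ∀ k : ℕ, k + 1 + 1 - 1 = k + 1 from fun _ => rfl] <;>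
    push_cast <;> ring

/-- The `s`-th coefficient in the definition of `jacobi`. -/
noncomputable def jacobiCoeff (α β : ℝ) (n s : ℕ) : ℝ :=
  genChoose ((n : ℝ) + α) (n - s) * genChoose ((n : ℝ) + β) s

lemma genChoose_succ (t : ℝ) (j : ℕ) :
    (j + 1) * genChoose t (j + 1) = (t - j) * genChoose t j := by
  have : (Nat.factorial j : ℝ) ≠ 0 := by positivity
  simp only [genChoose, Finset.prod_range_succ, Nat.factorial_succ]
  push_cast
  field_simp

lemma jacobiCoeff_succ (α β : ℝ) (s j : ℕ) :
    (s + 1) * (s + 1 + α) * jacobiCoeff α β (s + 1 + j) (s + 1)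
      = (j + 1) * (j + 1 + β) * jacobiCoeff α β (s + 1 + j) s := by
  have h₁ := genChoose_succ ((s + 1 + j : ℕ) + α) j
  have h₂ := genChoose_succ ((s + 1 + j : ℕ) + β) s
  have e₁ : s + 1 + j - (s + 1) = j := by omega
  have e₂ : s + 1 + j - s = j + 1 := by omega
  simp only [jacobiCoeff, e₁, e₂]
  push_cast at h₁ h₂ ⊢
  linear_combination (s + 1 + α) * genChoose (s + 1 + j + α) j * h₂
    - (j + 1 + β) * genChoose (s + 1 + j + β) s * h₁

lemma jacobi_eq_sum (α β : ℝ) (n : ℕ) (x : ℝ) : jacobi α β n x =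
    ∑ s ∈ Finset.range (n + 1), jacobiCoeff α β n s * jacobiMonomial s (n - s) x :=
  Finset.sum_congr rfl fun s _ => by simp only [jacobiCoeff, jacobiMonomial]; ring

/-- The derivative of the Jacobi polynomial. -/
noncomputable def jacobiDeriv (α β : ℝ) (n : ℕ) (x : ℝ) : ℝ :=
  ∑ s ∈ Finset.range (n + 1), jacobiCoeff α β n s * jacobiMonomialDeriv s (n - s) x

/-- The second derivative of the Jacobi polynomial. -/
noncomputable def jacobiDeriv₂ (α β : ℝ) (n : ℕ) (x : ℝ) : ℝ :=
  ∑ s ∈ Finset.range (n + 1), jacobiCoeff α β n s * jacobiMonomialDeriv₂ s (n - s) x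

lemma hasDerivAt_jacobi (α β : ℝ) (n : ℕ) (x : ℝ) :
    HasDerivAt (jacobi α β n) (jacobiDeriv α β n x) x := by
  rw [show jacobi α β n = _ from funext (jacobi_eq_sum α β n)]
  exact HasDerivAt.fun_sum fun s _ => (hasDerivAt_jacobiMonomial s (n - s) x).const_mul _

lemma hasDerivAt_jacobiDeriv (α β : ℝ) (n : ℕ) (x : ℝ) :
    HasDerivAt (jacobiDeriv α β n) (jacobiDeriv₂ α β n x) x :=
  HasDerivAt.fun_sum fun s _ => (hasDerivAt_jacobiMonomialDeriv s (n - s) x).const_mul _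

/-- The Jacobi differential equation. -/
lemma jacobi_ode (α β : ℝ) (n : ℕ) (x : ℝ) :
    (1 - x ^ 2) * jacobiDeriv₂ α β n x + (β - α - (α + β + 2) * x) * jacobiDeriv α β n x
      + n * (n + α + β + 1) * jacobi α β n x = 0 := by
  have key : ∀ s ∈ Finset.range (n + 1),
      (1 - x ^ 2) * (jacobiCoeff α β n s * jacobiMonomialDeriv₂ s (n - s) x)
        + (β - α - (α + β + 2) * x) * (jacobiCoeff α β n s * jacobiMonomialDeriv s (n - s) x)
        + n * (n + α + β + 1) * (jacobiCoeff α β n s * jacobiMonomial s (n - s) x)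
      = jacobiCoeff α β n s * ((n - s : ℕ) * ((n - s : ℕ) + β) * jacobiMonomial s (n - s - 1) x)
        - jacobiCoeff α β n s * (s * (s + α) * jacobiMonomial (s - 1) (n - s) x) := by
    intro s hs
    have h := jacobiMonomial_ode α β s (n - s) x
    rw [Nat.add_sub_cancel' (Nat.lt_succ_iff.mp (Finset.mem_range.mp hs))] at h
    linear_combination jacobiCoeff α β n s * h
  rw [jacobi_eq_sum, jacobiDeriv, jacobiDeriv₂, Finset.mul_sum, Finset.mul_sum, Finset.mul_sum,
    ← Finset.sum_add_distrib, ← Finset.sum_add_distrib, Finset.sum_congr rfl key,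
    Finset.sum_sub_distrib, Finset.sum_range_succ, Finset.sum_range_succ', sub_eq_zero]
  simp only [Nat.sub_self, Nat.cast_zero, zero_mul, mul_zero, add_zero, Nat.add_sub_cancel]
  refine Finset.sum_congr rfl fun s hs => ?_
  obtain ⟨j, rfl⟩ : ∃ j, n = s + 1 + j := ⟨n - (s + 1), by have := Finset.mem_range.mp hs; omega⟩
  have h := jacobiCoeff_succ α β s j
  have e₁ : s + 1 + j - (s + 1) = j := by omega
  have e₂ : s + 1 + j - s = j + 1 := by omega
  rw [e₁, e₂, Nat.add_sub_cancel]
  push_cast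
  linear_combination -(jacobiMonomial s j x) * h

lemma genChoose_natCast {m j : ℕ} (h : j ≤ m) : genChoose m j = m.choose j := by
  have key : ∀ i ≤ m, ∏ k ∈ Finset.range i, ((m : ℝ) - k) = m.descFactorial i := by
    intro i
    induction i with
    | zero => simp
    | succ i ih =>
      intro hi
      rw [Finset.prod_range_succ, ih (by omega), Nat.descFactorial_succ, Nat.cast_mul,
        Nat.cast_sub (by omega), mul_comm]
  rw [genChoose, key j h, Nat.descFactorial_eq_factorial_mul_choose, Nat.cast_mul,
    mul_div_cancel_left₀ _ (by positivity)]

lemma jacobi_neg_one (α : ℝ) (β n : ℕ) :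
    jacobi α β n (-1) = (n + β).choose n * (-1) ^ n := by
  rw [jacobi, Finset.sum_range_succ, Finset.sum_eq_zero, zero_add, Nat.sub_self]
  · have := genChoose_natCast (Nat.le_add_right n β)
    push_cast at this
    have h₀ : genChoose ((n : ℝ) + α) 0 = 1 := by simp [genChoose]
    norm_num [this, h₀]
  · intro s hs
    have : n - s ≠ 0 := by have := Finset.mem_range.mp hs; omega
    simp [this]

lemma apply_right_le_of_deriv_nonpos {f f' : ℝ → ℝ} {a b : ℝ} (hab : a ≤ b)
    (hc : ContinuousOn f (Set.Icc a b)) (hd : ∀ x ∈ Set.Ioo a b, HasDerivAt f (f' x) x)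
    (hn : ∀ x ∈ Set.Ioo a b, f' x ≤ 0) : f b ≤ f a := by
  refine antitoneOn_of_deriv_nonpos (convex_Icc a b) hc ?_ ?_ (Set.left_mem_Icc.2 hab)
    (Set.right_mem_Icc.2 hab) hab
  · rw [interior_Icc]
    exact fun x hx => (hd x hx).differentiableAt.differentiableWithinAt
  · rw [interior_Icc]
    exact fun x hx => (hd x hx).deriv ▸ hn x hx

/-- A differential form of Grönwall's inequality. -/
lemma apply_right_le_exp_mul {f f' g g' : ℝ → ℝ} {a b : ℝ} (hab : a ≤ b)
    (hf : ∀ x ∈ Set.Icc a b, HasDerivAt f (f' x) x)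
    (hg : ∀ x ∈ Set.Icc a b, HasDerivAt g (g' x) x)
    (h : ∀ x ∈ Set.Icc a b, f' x ≤ g' x * f x) : f b ≤ Real.exp (g b - g a) * f a := by
  have hd : ∀ x ∈ Set.Icc a b, HasDerivAt (fun x => f x * Real.exp (-g x))
      (f' x * Real.exp (-g x) + f x * (Real.exp (-g x) * -g' x)) x :=
    fun x hx => (hf x hx).mul (hg x hx).neg.exp
  have key := apply_right_le_of_deriv_nonpos hab
    (fun x hx => (hd x hx).continuousAt.continuousWithinAt)
    (fun x hx => hd x (Set.Ioo_subset_Icc_self hx)) (fun x hx => by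
      have := h x (Set.Ioo_subset_Icc_self hx)
      nlinarith [Real.exp_pos (-g x)])
  have e₁ : Real.exp (g b - g a) = Real.exp (g b) * Real.exp (-g a) := by
    rw [← Real.exp_add, sub_eq_add_neg]
  have e₂ : Real.exp (g b) * Real.exp (-g b) = 1 := by rw [← Real.exp_add]; simp
  calc f b = Real.exp (g b) * (f b * Real.exp (-g b)) := by linear_combination -f b * e₂
    _ ≤ Real.exp (g b) * (f a * Real.exp (-g a)) := by gcongr
    _ = Real.exp (g b - g a) * f a := by rw [e₁]; ring

/-- The system satisfied by the squares `X = h²`, `Z = (Dh)²` and the product `Y = h Dh`, where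
`D = (1 - x²) d/dx` and `h` is a solution of `D² h + W h = 0`. -/
structure IsEnergySystem (W X Y Z : ℝ → ℝ) : Prop where
  hasDerivAt_fst : ∀ x ∈ Set.Ioo (-1 : ℝ) 1, HasDerivAt X (2 * Y x / (1 - x ^ 2)) x
  hasDerivAt_mid : ∀ x ∈ Set.Ioo (-1 : ℝ) 1, HasDerivAt Y ((Z x - W x * X x) / (1 - x ^ 2)) x
  hasDerivAt_snd : ∀ x ∈ Set.Ioo (-1 : ℝ) 1, HasDerivAt Z (-(2 * W x * Y x) / (1 - x ^ 2)) x
  fst_nonneg : ∀ x ∈ Set.Icc (-1 : ℝ) 1, 0 ≤ X x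
  snd_nonneg : ∀ x ∈ Set.Icc (-1 : ℝ) 1, 0 ≤ Z x
  mid_sq : ∀ x, Y x ^ 2 = X x * Z x

lemma IsEnergySystem.two_mul_abs_le {W X Y Z : ℝ → ℝ} (h : IsEnergySystem W X Y Z) {x m : ℝ}
    (hx : x ∈ Set.Icc (-1 : ℝ) 1) (hm : 0 < m) : 2 * |Y x| ≤ m * X x + Z x / m := by
  have hX := h.fst_nonneg x hx
  have hZ := h.snd_nonneg x hx
  refine le_of_sq_le_sq ?_ (by positivity)
  have e : m * X x * (Z x / m) = X x * Z x := by field_simp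
  rw [mul_pow, sq_abs, h.mid_sq]
  nlinarith [sq_nonneg (m * X x - Z x / m)]

/-- The potential of the Jacobi differential equation, written in terms of its turning point. -/
noncomputable def jacobiPotential (u t β x : ℝ) : ℝ :=
  u ^ 2 * (1 + x) * (t - x) - (1 - x) * ((1 + x) / 4 + β ^ 2 / 2)

/-- The square root of the leading part of `jacobiPotential`. -/
noncomputable def jacobiFreq (u t x : ℝ) : ℝ := u * √(1 + x) * √(t - x)

/-- The logarithmic derivative of `jacobiFreq` in the variable `artanh x`, divided by
`jacobiFreq`. -/
noncomputable def jacobiFreqSlope (u t x : ℝ) : ℝ :=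
  (1 - x) * (t - 1 - 2 * x) / (2 * u * √(1 + x) * √(t - x) ^ 3)

/-- The derivative of `jacobiFreqSlope`. -/
noncomputable def jacobiFreqSlopeDeriv (u t x : ℝ) : ℝ :=
  (-(1 + t) ^ 2 + (1 + x) * (1 + t) * (2 - (1 + t) / 2) - (1 + x) ^ 2 * (4 - 2 * (1 + t))) /
    (2 * u * √(1 + x) ^ 3 * √(t - x) ^ 5)

lemma hasDerivAt_sqrt_one_add {x : ℝ} (hx : -1 < x) :
    HasDerivAt (fun x => √(1 + x)) (1 / (2 * √(1 + x))) x :=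
  ((hasDerivAt_id x).const_add 1).sqrt (by simp; linarith)

lemma hasDerivAt_sqrt_const_sub {t x : ℝ} (hx : x < t) :
    HasDerivAt (fun x => √(t - x)) (-1 / (2 * √(t - x))) x :=
  ((hasDerivAt_id x).const_sub t).sqrt (by simp; linarith)

lemma hasDerivAt_jacobiFreqSlope {u t x : ℝ} (hu : 0 < u) (hx : -1 < x) (hxt : x < t) :
    HasDerivAt (jacobiFreqSlope u t) (jacobiFreqSlopeDeriv u t x) x := by
  have hr : 0 < √(1 + x) := Real.sqrt_pos.2 (by linarith)
  have hs : 0 < √(t - x) := Real.sqrt_pos.2 (by linarith)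
  have h₁ : HasDerivAt (fun x : ℝ => (1 - x) * (t - 1 - 2 * x))
      (-1 * (t - 1 - 2 * x) + (1 - x) * -(2 * 1)) x :=
    ((hasDerivAt_id x).const_sub 1).mul (((hasDerivAt_id x).const_mul 2).const_sub (t - 1))
  have h₂ := ((hasDerivAt_sqrt_one_add hx).const_mul (2 * u)).mul
    ((hasDerivAt_sqrt_const_sub hxt).pow 3)
  refine (h₁.div h₂ (by simp only [Pi.mul_apply, Pi.pow_apply]; positivity)).congr_deriv ?_
  have er : √(1 + x) ^ 2 = 1 + x := Real.sq_sqrt (by linarith)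
  have es : √(t - x) ^ 2 = t - x := Real.sq_sqrt (by linarith)
  simp only [jacobiFreqSlopeDeriv, Pi.mul_apply, Pi.pow_apply]
  generalize √(1 + x) = r at *
  generalize √(t - x) = s at *
  obtain rfl : x = r ^ 2 - 1 := by linarith
  obtain rfl : t = s ^ 2 + r ^ 2 - 1 := by linarith
  field_simp
  ring

lemma jacobiFreqSlopeDeriv_nonpos {u t x : ℝ} (hu : 0 < u) (hx : -1 < x) (hxt : x < t)
    (ht : t ≤ 1) : jacobiFreqSlopeDeriv u t x ≤ 0 := by
  refine div_nonpos_of_nonpos_of_nonneg ?_ (by positivity)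
  obtain ⟨p, rfl⟩ : ∃ p, x = p - 1 := ⟨x + 1, by ring⟩
  obtain ⟨q, rfl⟩ : ∃ q, t = q - 1 := ⟨t + 1, by ring⟩
  have h₁ : 0 ≤ (2 - q) * ((q - p) ^ 2 + 3 * p ^ 2) :=
    mul_nonneg (by linarith) (by positivity)
  have h₂ : 0 ≤ q * (q * (q - p)) :=
    mul_nonneg (by linarith) (mul_nonneg (by linarith) (by linarith))
  linarith

lemma hasDerivAt_jacobiFreq {u t x : ℝ} (hx : -1 < x) (hxt : x < t) :
    HasDerivAt (jacobiFreq u t)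
      (u * (t - 1 - 2 * x) / (2 * √(1 + x) * √(t - x))) x := by
  have hr : 0 < √(1 + x) := Real.sqrt_pos.2 (by linarith)
  have hs : 0 < √(t - x) := Real.sqrt_pos.2 (by linarith)
  refine (((hasDerivAt_sqrt_one_add hx).const_mul u).mul
    (hasDerivAt_sqrt_const_sub hxt)).congr_deriv ?_
  have er : √(1 + x) ^ 2 = 1 + x := Real.sq_sqrt (by linarith)
  have es : √(t - x) ^ 2 = t - x := Real.sq_sqrt (by linarith)
  field_simp
  linear_combination u * es - u * er

/-- A corrected amplitude, which is nearly constant where the solution oscillates. -/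
noncomputable def jacobiAmplitude (u t : ℝ) (X Y Z : ℝ → ℝ) (x : ℝ) : ℝ :=
  jacobiFreq u t x * X x + Z x / jacobiFreq u t x + jacobiFreqSlope u t x * Y x

lemma hasDerivAt_jacobiAmplitude {u t β : ℝ} {X Y Z : ℝ → ℝ}
    (h : IsEnergySystem (jacobiPotential u t β) X Y Z) (hu : 0 < u) (ht : t ≤ 1) {x : ℝ}
    (hx : -1 < x) (hxt : x < t) :
    HasDerivAt (jacobiAmplitude u t X Y Z)
      (jacobiFreqSlopeDeriv u t x * Y x + ((1 + x) / 4 + β ^ 2 / 2) / (1 + x) *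
        (2 * Y x / jacobiFreq u t x + jacobiFreqSlope u t x * X x)) x := by
  have hr : 0 < √(1 + x) := Real.sqrt_pos.2 (by linarith)
  have hs : 0 < √(t - x) := Real.sqrt_pos.2 (by linarith)
  have hm : 0 < jacobiFreq u t x := by unfold jacobiFreq; positivity
  have hxI : x ∈ Set.Ioo (-1 : ℝ) 1 := ⟨hx, by linarith⟩
  have hd := hasDerivAt_jacobiFreq (u := u) hx hxt
  refine (((hd.mul (h.hasDerivAt_fst x hxI)).add ((h.hasDerivAt_snd x hxI).div hd hm.ne')).add
    ((hasDerivAt_jacobiFreqSlope hu hx hxt).mul (h.hasDerivAt_mid x hxI))).congr_deriv ?_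
  have er : √(1 + x) ^ 2 = 1 + x := Real.sq_sqrt (by linarith)
  have es : √(t - x) ^ 2 = t - x := Real.sq_sqrt (by linarith)
  have hx' : 1 - x ≠ 0 := by linarith
  have hx'' : 1 - x ^ 2 = (1 - x) * (1 + x) := by ring
  generalize jacobiFreqSlopeDeriv u t x = g
  rw [hx'']
  simp only [jacobiPotential, jacobiFreqSlope, jacobiFreq]
  generalize √(1 + x) = r at *
  generalize √(t - x) = s at *
  obtain rfl : x = r ^ 2 - 1 := by linarith
  obtain rfl : t = s ^ 2 + r ^ 2 - 1 := by linarith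
  rw [show 1 + (r ^ 2 - 1) = r ^ 2 by ring, show s ^ 2 + r ^ 2 - 1 - (r ^ 2 - 1) = s ^ 2 by ring]
  generalize hk : 1 - (r ^ 2 - 1) = k at *
  field_simp
  ring

lemma abs_jacobiAmplitude_sub_le {u t β : ℝ} {X Y Z : ℝ → ℝ}
    (h : IsEnergySystem (jacobiPotential u t β) X Y Z) (hu : 0 < u) (ht : t ≤ 1) {x : ℝ}
    (hx : -1 < x) (hxt : x < t) (hγ : |jacobiFreqSlope u t x| ≤ 1) :
    |jacobiAmplitude u t X Y Z x - (jacobiFreq u t x * X x + Z x / jacobiFreq u t x)| ≤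
      (jacobiFreq u t x * X x + Z x / jacobiFreq u t x) / 2 := by
  have hr : 0 < √(1 + x) := Real.sqrt_pos.2 (by linarith)
  have hs : 0 < √(t - x) := Real.sqrt_pos.2 (by linarith)
  have hm : 0 < jacobiFreq u t x := by unfold jacobiFreq; positivity
  have h₁ := h.two_mul_abs_le (x := x) ⟨hx.le, by linarith⟩ hm
  rw [jacobiAmplitude, add_sub_cancel_left, abs_mul]
  nlinarith [abs_nonneg (Y x)]

/-- The amplitude is controlled throughout the oscillatory region by its left end value. -/
lemma IsEnergySystem.amplitude_le {u t β : ℝ} {X Y Z : ℝ → ℝ}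
    (h : IsEnergySystem (jacobiPotential u t β) X Y Z) (hu : 0 < u) (ht : t ≤ 1) {x₁ x₂ : ℝ}
    (hx₁ : -1 < x₁) (hx₂ : x₂ < t) (hγ₁ : jacobiFreqSlope u t x₁ ≤ 1)
    (hγ₂ : -1 ≤ jacobiFreqSlope u t x₂) {x : ℝ} (hx : x ∈ Set.Icc x₁ x₂) :
    jacobiFreq u t x * X x + Z x / jacobiFreq u t x ≤
      3 * Real.exp (2 + (4 + 4 * β ^ 2) / (u * (1 + t)) * (√(t - x₁) / √(1 + x₁))) *
        (jacobiFreq u t x₁ * X x₁ + Z x₁ / jacobiFreq u t x₁) := by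
  have anti : ∀ y z, x₁ ≤ y → y ≤ z → z ≤ x₂ →
      jacobiFreqSlope u t z ≤ jacobiFreqSlope u t y := fun y z hy hyz hz =>
    apply_right_le_of_deriv_nonpos (f' := jacobiFreqSlopeDeriv u t) hyz
      (fun w hw => (hasDerivAt_jacobiFreqSlope hu (by linarith [hw.1])
        (by linarith [hw.2])).continuousAt.continuousWithinAt)
      (fun w hw => hasDerivAt_jacobiFreqSlope hu (by linarith [hw.1]) (by linarith [hw.2]))
      (fun w hw => jacobiFreqSlopeDeriv_nonpos hu (by linarith [hw.1]) (by linarith [hw.2]) ht)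
  have hγ : ∀ y ∈ Set.Icc x₁ x₂, |jacobiFreqSlope u t y| ≤ 1 := fun y hy =>
    abs_le.2 ⟨hγ₂.trans (anti y x₂ hy.1 hy.2 le_rfl), (anti x₁ y le_rfl hy.1 hy.2).trans hγ₁⟩
  have hτ : 0 < 1 + t := by linarith [hx.1, hx.2]
  set c : ℝ := (4 + 4 * β ^ 2) / (u * (1 + t)) with hc
  have hc₀ : 0 ≤ c := by positivity
  have hg : ∀ y ∈ Set.Icc x₁ x,
      HasDerivAt (fun y => -jacobiFreqSlope u t y - c * (√(t - y) / √(1 + y)))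
        (-jacobiFreqSlopeDeriv u t y +
          (2 + 2 * β ^ 2) / ((1 + y) * jacobiFreq u t y)) y := by
    intro y hy
    have hy₁ : -1 < y := by linarith [hy.1]
    have hy₂ : y < t := by linarith [hy.2, hx.2]
    have hr : 0 < √(1 + y) := Real.sqrt_pos.2 (by linarith)
    have hs : 0 < √(t - y) := Real.sqrt_pos.2 (by linarith)
    refine ((hasDerivAt_jacobiFreqSlope hu hy₁ hy₂).neg.sub
      (((hasDerivAt_sqrt_const_sub hy₂).div (hasDerivAt_sqrt_one_add hy₁)
        hr.ne').const_mul c)).congr_deriv ?_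
    have er : √(1 + y) ^ 2 = 1 + y := Real.sq_sqrt (by linarith)
    have es : √(t - y) ^ 2 = t - y := Real.sq_sqrt (by linarith)
    have e : 1 + t = √(1 + y) ^ 2 + √(t - y) ^ 2 := by linarith
    rw [hc, jacobiFreq, e, ← er, Real.sqrt_sq hr.le]
    field_simp
    ring
  have key := apply_right_le_exp_mul hx.1
    (fun y hy => hasDerivAt_jacobiAmplitude h hu ht (by linarith [hy.1])
      (by linarith [hy.2, hx.2])) hg (by
    intro y hy
    have hy₁ : -1 < y := by linarith [hy.1]
    have hy₂ : y < t := by linarith [hy.2, hx.2]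
    have hr : 0 < √(1 + y) := Real.sqrt_pos.2 (by linarith)
    have hs : 0 < √(t - y) := Real.sqrt_pos.2 (by linarith)
    have hm : 0 < jacobiFreq u t y := by unfold jacobiFreq; positivity
    have hyI : y ∈ Set.Icc (-1 : ℝ) 1 := ⟨hy₁.le, by linarith⟩
    have hB := (abs_le.1 (abs_jacobiAmplitude_sub_le h hu ht hy₁ hy₂
      (hγ y ⟨hy.1, hy.2.trans hx.2⟩))).1
    have hY := h.two_mul_abs_le hyI hm
    have hX := h.fst_nonneg y hyI
    have hZ : 0 ≤ Z y / jacobiFreq u t y := div_nonneg (h.snd_nonneg y hyI) hm.le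
    have hD := jacobiFreqSlopeDeriv_nonpos hu hy₁ hy₂ ht
    have hg' := hγ y ⟨hy.1, hy.2.trans hx.2⟩
    set B := jacobiAmplitude u t X Y Z y
    set m := jacobiFreq u t y
    set γ := jacobiFreqSlope u t y
    have h₁ : jacobiFreqSlopeDeriv u t y * Y y ≤ -jacobiFreqSlopeDeriv u t y * B := by
      have : -Y y ≤ B := by linarith [neg_abs_le (Y y)]
      nlinarith
    have h₂ : 2 * Y y / m + γ * X y ≤ 4 * B / m := by
      have : γ * (m * X y) ≤ m * X y := by
        nlinarith [le_abs_self γ, mul_nonneg hm.le hX]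
      rw [le_div_iff₀ hm, add_mul, div_mul_cancel₀ _ hm.ne']
      linarith [le_abs_self (Y y)]
    have h₃ : (1 + y) / 4 + β ^ 2 / 2 ≤ (1 + β ^ 2) / 2 := by linarith
    have h₄ : 0 ≤ B := by nlinarith [mul_nonneg hm.le hX]
    have hy₃ : 0 < 1 + y := by linarith
    calc jacobiFreqSlopeDeriv u t y * Y y + ((1 + y) / 4 + β ^ 2 / 2) / (1 + y) *
          (2 * Y y / m + γ * X y)
        ≤ -jacobiFreqSlopeDeriv u t y * B + ((1 + y) / 4 + β ^ 2 / 2) / (1 + y) *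
          (4 * B / m) := by gcongr
      _ ≤ -jacobiFreqSlopeDeriv u t y * B + (1 + β ^ 2) / 2 / (1 + y) * (4 * B / m) := by gcongr
      _ = _ := by field_simp; ring)
  have hm : ∀ y ∈ Set.Icc x₁ x₂, 0 < jacobiFreq u t y := by
    intro y hy
    have hr : 0 < √(1 + y) := Real.sqrt_pos.2 (by linarith [hy.1])
    have hs : 0 < √(t - y) := Real.sqrt_pos.2 (by linarith [hy.2])
    unfold jacobiFreq
    positivity
  have hx₁' : x₁ ∈ Set.Icc x₁ x₂ := ⟨le_rfl, hx.1.trans hx.2⟩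
  have hB := (abs_le.1 (abs_jacobiAmplitude_sub_le h hu ht (by linarith [hx.1])
    (by linarith [hx.2]) (hγ x hx))).1
  have hB₁ := abs_le.1 (abs_jacobiAmplitude_sub_le h hu ht hx₁ (by linarith [hx.1, hx.2])
    (hγ x₁ hx₁'))
  have hexp : Real.exp ((-jacobiFreqSlope u t x - c * (√(t - x) / √(1 + x))) -
      (-jacobiFreqSlope u t x₁ - c * (√(t - x₁) / √(1 + x₁)))) ≤
      Real.exp (2 + c * (√(t - x₁) / √(1 + x₁))) := by
    have : 0 ≤ c * (√(t - x) / √(1 + x)) := by positivity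
    refine Real.exp_le_exp.2 ?_
    linarith [abs_le.1 (hγ x hx), abs_le.1 (hγ x₁ hx₁')]
  have hx₁I : x₁ ∈ Set.Icc (-1 : ℝ) 1 := ⟨hx₁.le, by linarith [hx.1, hx.2]⟩
  have hA₁ : 0 ≤ jacobiFreq u t x₁ * X x₁ + Z x₁ / jacobiFreq u t x₁ :=
    add_nonneg (mul_nonneg (hm x₁ hx₁').le (h.fst_nonneg x₁ hx₁I))
      (div_nonneg (h.snd_nonneg x₁ hx₁I) (hm x₁ hx₁').le)
  have hfin := key.trans (mul_le_mul hexp (show _ ≤ 3 / 2 *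
    (jacobiFreq u t x₁ * X x₁ + Z x₁ / jacobiFreq u t x₁) by linarith [hB₁.2]) (by linarith [hB₁.1])
    (Real.exp_pos _).le)
  linarith

/-- Control of the solution across the transition region. -/
lemma IsEnergySystem.transition_le {u t β a K δ : ℝ} {X Y Z : ℝ → ℝ}
    (h : IsEnergySystem (jacobiPotential u t β) X Y Z) (hu : 0 < u) (ha : 1 ≤ a)
    (hat : a ^ 3 = 2 * u ^ 2 * (1 - t)) (hK : 0 ≤ K) (hδ : 0 < δ)
    (hx₂ : δ / 2 ≤ 1 + (t - K * a ^ 2 / u ^ 2)) {x : ℝ}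
    (hx : x ∈ Set.Icc (t - K * a ^ 2 / u ^ 2) t) :
    a * X x + Z x / a ≤ Real.exp (4 * K * (2 + 2 * K + β ^ 2) / δ) *
      (a * X (t - K * a ^ 2 / u ^ 2) + Z (t - K * a ^ 2 / u ^ 2) / a) := by
  have ha₀ : 0 < a := by linarith
  have ht : t < 1 := by
    have : 0 < 2 * u ^ 2 * (1 - t) := hat ▸ pow_pos ha₀ 3
    linarith [pos_of_mul_pos_right this (by positivity)]
  set x₂ := t - K * a ^ 2 / u ^ 2 with hx₂'
  set L := 4 * (2 + 2 * K + β ^ 2) * u ^ 2 / (δ * a ^ 2) with hL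
  have hL₀ : 0 ≤ L := by positivity
  have hI : ∀ y ∈ Set.Icc x₂ x, y ∈ Set.Ioo (-1 : ℝ) 1 := fun y hy =>
    ⟨by linarith [hy.1], by linarith [hy.2, hx.2]⟩
  have key := apply_right_le_exp_mul (f := fun y => a * X y + Z y / a) (g := fun y => L * y) hx.1
    (fun y hy => ((h.hasDerivAt_fst y (hI y hy)).const_mul a).add
      ((h.hasDerivAt_snd y (hI y hy)).div_const a))
    (fun y _ => (hasDerivAt_id y).const_mul L) (by
    intro y hy
    have hy₁ := hI y hy
    have hY := h.two_mul_abs_le ⟨hy₁.1.le, hy₁.2.le⟩ ha₀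
    set S := a * X y + Z y / a
    have hS : 0 ≤ S := le_trans (by positivity) hY
    have hty : t - y ≤ K * a ^ 2 / u ^ 2 := by linarith [hy.1]
    have hty₀ : 0 ≤ t - y := by linarith [hy.2, hx.2]
    have ha₂ : 1 ≤ a ^ 2 := one_le_pow₀ ha
    have hW : |jacobiPotential u t β y| ≤ (1 + 2 * K + β ^ 2) * a ^ 2 := by
      have h₁ : u ^ 2 * (1 + y) * (t - y) ≤ 2 * K * a ^ 2 := by
        calc u ^ 2 * (1 + y) * (t - y) ≤ u ^ 2 * 2 * (K * a ^ 2 / u ^ 2) := by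
              gcongr
              linarith [hy₁.2]
          _ = 2 * K * a ^ 2 := by field_simp
      have h₀ : 0 ≤ u ^ 2 * (1 + y) * (t - y) :=
        mul_nonneg (mul_nonneg (sq_nonneg u) (by linarith [hy₁.1])) hty₀
      have h₂ : (1 - y) * ((1 + y) / 4 + β ^ 2 / 2) ≤ 2 * (1 / 2 + β ^ 2 / 2) :=
        mul_le_mul (by linarith [hy₁.1]) (by linarith [hy₁.2])
          (by have := hy₁.1; have := sq_nonneg β; linarith) (by norm_num)
      have h₃ : 0 ≤ (1 - y) * ((1 + y) / 4 + β ^ 2 / 2) :=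
        mul_nonneg (by linarith [hy₁.2]) (by have := hy₁.1; have := sq_nonneg β; linarith)
      have h₄ : 1 + β ^ 2 ≤ (1 + β ^ 2) * a ^ 2 := le_mul_of_one_le_right (by positivity) ha₂
      rw [jacobiPotential, abs_le]
      constructor <;> nlinarith
    have hden : δ / 2 * (a ^ 3 / (2 * u ^ 2)) ≤ 1 - y ^ 2 := by
      have e : a ^ 3 / (2 * u ^ 2) = 1 - t := by rw [hat]; field_simp
      rw [e, show 1 - y ^ 2 = (1 + y) * (1 - y) by ring]
      exact mul_le_mul (by linarith [hy.1]) (by linarith) (by linarith) (by linarith [hy₁.1])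
    have hden₀ : 0 < δ / 2 * (a ^ 3 / (2 * u ^ 2)) := by positivity
    have hnum : a * (2 * Y y) + -(2 * jacobiPotential u t β y * Y y) / a ≤
        (2 + 2 * K + β ^ 2) * a * S := by
      have h₁ : -(jacobiPotential u t β y * Y y) ≤ (1 + 2 * K + β ^ 2) * a ^ 2 * |Y y| := by
        refine (neg_le_abs _).trans ?_
        rw [abs_mul]
        gcongr
      have h₂ : -(2 * jacobiPotential u t β y * Y y) / a ≤ (1 + 2 * K + β ^ 2) * a * (2 * |Y y|) := by
        rw [div_le_iff₀ ha₀]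
        linarith
      have h₃ : (1 + 2 * K + β ^ 2) * a * (2 * |Y y|) ≤ (1 + 2 * K + β ^ 2) * a * S := by gcongr
      have h₄ : a * (2 * Y y) ≤ a * S := by gcongr; linarith [le_abs_self (Y y)]
      linarith
    calc a * (2 * Y y / (1 - y ^ 2)) + -(2 * jacobiPotential u t β y * Y y) / (1 - y ^ 2) / a
        = (a * (2 * Y y) + -(2 * jacobiPotential u t β y * Y y) / a) / (1 - y ^ 2) := by ring
      _ ≤ (2 + 2 * K + β ^ 2) * a * S / (1 - y ^ 2) := by
          gcongr
          linarith
      _ ≤ (2 + 2 * K + β ^ 2) * a * S / (δ / 2 * (a ^ 3 / (2 * u ^ 2))) := by gcongr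
      _ = L * 1 * S := by rw [hL]; field_simp; ring)
  refine key.trans (mul_le_mul_of_nonneg_right (Real.exp_le_exp.2 ?_) ?_)
  · calc L * x - L * x₂ = L * (x - x₂) := by ring
      _ ≤ L * (K * a ^ 2 / u ^ 2) := by gcongr; linarith [hx.2]
      _ = _ := by rw [hL]; field_simp
  · have := hI x₂ ⟨le_rfl, hx.1⟩
    exact le_trans (by positivity) (h.two_mul_abs_le ⟨this.1.le, this.2.le⟩ ha₀)

lemma hasDerivAt_jacobiPotential (u t β x : ℝ) :
    HasDerivAt (jacobiPotential u t β) (u ^ 2 * (t - 1 - 2 * x) + x / 2 + β ^ 2 / 2) x := by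
  have h₁ : HasDerivAt (fun x : ℝ => 1 + x) 1 x := (hasDerivAt_id x).const_add 1
  have h₂ : HasDerivAt (fun x : ℝ => t - x) (-1) x := (hasDerivAt_id x).const_sub t
  have h₃ : HasDerivAt (fun x : ℝ => 1 - x) (-1) x := (hasDerivAt_id x).const_sub 1
  refine (((h₁.const_mul (u ^ 2)).mul h₂).sub
    (h₃.mul ((h₁.div_const 4).add_const (β ^ 2 / 2)))).congr_deriv ?_
  ring

/-- Monotonicity of the solution beyond the turning point. -/
lemma IsEnergySystem.decay {u t β : ℝ} {X Y Z : ℝ → ℝ}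
    (h : IsEnergySystem (jacobiPotential u t β) X Y Z) (hX : Continuous X) (hY : Continuous Y)
    (hZ : Continuous Z) (hX₁ : X 1 = 0) (hY₁ : Y 1 = 0) (hZ₁ : Z 1 = 0) (ht₁ : -1 < t)
    (hu : 1 + β ^ 2 ≤ 2 * u ^ 2 * (1 + t)) {x : ℝ} (hx : x ∈ Set.Icc t 1) :
    X x ≤ X t ∧ X x ^ 2 * (u ^ 2 * (1 + t) * (x - t)) ≤ Y t ^ 2 := by
  have hI : ∀ y ∈ Set.Ioo t 1, y ∈ Set.Ioo (-1 : ℝ) 1 := fun y hy => ⟨by linarith [hy.1], hy.2⟩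
  have hWc : Continuous (jacobiPotential u t β) := by unfold jacobiPotential; fun_prop
  have hE : ∀ y ∈ Set.Icc t 1, 0 ≤ Z y + jacobiPotential u t β y * X y := by
    intro y hy
    have := apply_right_le_of_deriv_nonpos (f := fun y => Z y + jacobiPotential u t β y * X y)
      (f' := fun y => (u ^ 2 * (t - 1 - 2 * y) + y / 2 + β ^ 2 / 2) * X y) hy.2
      (hZ.add (hWc.mul hX)).continuousOn (fun w hw => ?_) (fun w hw => ?_)
    · simpa [hX₁, hZ₁] using this
    · have hwI := hI w ⟨by linarith [hw.1, hy.1], hw.2⟩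
      have hw' : 1 - w ^ 2 ≠ 0 := by nlinarith [hwI.1, hwI.2]
      refine ((h.hasDerivAt_snd w hwI).add
        ((hasDerivAt_jacobiPotential u t β w).mul (h.hasDerivAt_fst w hwI))).congr_deriv ?_
      field_simp
      simp
    · have hwI := hI w ⟨by linarith [hw.1, hy.1], hw.2⟩
      refine mul_nonpos_of_nonpos_of_nonneg ?_ (h.fst_nonneg w ⟨hwI.1.le, hwI.2.le⟩)
      have : u ^ 2 * (t - 1 - 2 * w) ≤ u ^ 2 * (-(1 + t)) := by
        gcongr
        linarith [hw.1, hy.1]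
      linarith [hwI.2]
  have hW : ∀ y ∈ Set.Icc t 1, jacobiPotential u t β y ≤ -(u ^ 2 * (1 + t) * (y - t)) := by
    intro y hy
    have h₁ : 0 ≤ (1 - y) * ((1 + y) / 4 + β ^ 2 / 2) :=
      mul_nonneg (by linarith [hy.2])
        (by have := hy.1; have := sq_nonneg β; linarith)
    have h₂ : u ^ 2 * (1 + t) * (y - t) ≤ u ^ 2 * (1 + y) * (y - t) := by
      have := hy.1
      gcongr
    rw [jacobiPotential]
    linarith
  have hmono : ∀ y z, t ≤ y → y ≤ z → z ≤ 1 → Y y ≤ Y z := fun y z hy hyz hz =>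
    neg_le_neg_iff.1 <| apply_right_le_of_deriv_nonpos (f := fun y => -Y y) hyz
      hY.neg.continuousOn (fun w hw => (h.hasDerivAt_mid w (hI w ⟨by linarith [hw.1],
        by linarith [hw.2]⟩)).neg) (fun w hw => by
        have hwt : w ∈ Set.Icc t 1 := ⟨by linarith [hw.1], by linarith [hw.2]⟩
        have hwI := hI w ⟨by linarith [hw.1], by linarith [hw.2]⟩
        have h₁ := hW w hwt
        have h₂ : 0 ≤ u ^ 2 * (1 + t) * (w - t) :=
          mul_nonneg (mul_nonneg (sq_nonneg u) (by linarith)) (by linarith [hwt.1])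
        have h₃ := h.fst_nonneg w ⟨hwI.1.le, hwI.2.le⟩
        have h₄ := h.snd_nonneg w ⟨hwI.1.le, hwI.2.le⟩
        have h₅ : 0 ≤ 1 - w ^ 2 := by nlinarith [hwI.1, hwI.2]
        refine neg_nonpos.2 (div_nonneg ?_ h₅)
        nlinarith)
  have hYn : ∀ y ∈ Set.Icc t 1, Y y ≤ 0 := fun y hy => hY₁ ▸ hmono y 1 hy.1 hy.2 le_rfl
  constructor
  · exact apply_right_le_of_deriv_nonpos hx.1 hX.continuousOn
      (fun w hw => h.hasDerivAt_fst w (hI w ⟨hw.1, by linarith [hw.2, hx.2]⟩))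
      (fun w hw => by
        have hwI := hI w ⟨hw.1, by linarith [hw.2, hx.2]⟩
        refine div_nonpos_of_nonpos_of_nonneg ?_ (by nlinarith [hwI.1, hwI.2])
        linarith [hYn w ⟨hw.1.le, hwI.2.le⟩])
  · have hXx := h.fst_nonneg x ⟨by linarith [hx.1], hx.2⟩
    have h₁ := hmono t x le_rfl hx.1 hx.2
    have h₂ := hYn x hx
    have h₃ := hE x hx
    have h₄ := hW x hx
    calc X x ^ 2 * (u ^ 2 * (1 + t) * (x - t)) = X x * (X x * (u ^ 2 * (1 + t) * (x - t))) := by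
          ring
      _ ≤ X x * Z x := by gcongr; nlinarith
      _ = Y x ^ 2 := (h.mid_sq x).symm
      _ ≤ Y t ^ 2 := by nlinarith

set_option maxHeartbeats 2000000 in
/-- Uniform pointwise bound through the oscillatory, transition and decay regions. -/
lemma IsEnergySystem.sq_mul_le {u t β a k δ ε M : ℝ} {X Y Z : ℝ → ℝ}
    (h : IsEnergySystem (jacobiPotential u t β) X Y Z) (hX : Continuous X) (hY : Continuous Y)
    (hZ : Continuous Z) (hX₁ : X 1 = 0) (hY₁ : Y 1 = 0) (hZ₁ : Z 1 = 0) (hu : 0 < u)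
    (ha : 1 ≤ a) (hat : a ^ 3 = 2 * u ^ 2 * (1 - t)) (hk : 2 ≤ k) (hδ : 0 < δ)
    (hkδ : 8 ≤ k ^ 2 * δ) (hε : 0 < ε) (ht : δ ≤ 1 + t) (huβ : 1 + β ^ 2 ≤ 2 * u ^ 2 * δ)
    (hku : k ^ 2 / u ^ 2 ≤ δ / 2) (hkau : k ^ 2 * a ^ 2 / u ^ 2 ≤ δ / 2)
    (hkε : k ^ 2 / u ^ 2 ≤ ε) (hXM : X (-1 + k ^ 2 / u ^ 2) ≤ M)
    (hZM : Z (-1 + k ^ 2 / u ^ 2) ≤ M) {A S x : ℝ}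
    (hA : A = 3 * Real.exp (2 + (4 + 4 * β ^ 2) / δ) * ((2 * k + 1) * M))
    (hS : S = Real.exp (4 * k ^ 2 * (2 + 2 * k ^ 2 + β ^ 2) / δ) * (2 * k * A))
    (hx : x ∈ Set.Icc (-1 + ε) 1) :
    X x ^ 2 * (u ^ 2 * |x - t| + a ^ 2) ≤
      2 * A ^ 2 / ε + (k ^ 2 + 1) * S ^ 2 + S ^ 2 * (1 + 1 / δ) := by
  have ha₀ : 0 < a := by linarith
  have hk₀ : 0 < k := by linarith
  have ht₁ : t < 1 := by
    have : 0 < 2 * u ^ 2 * (1 - t) := hat ▸ pow_pos ha₀ 3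
    linarith [pos_of_mul_pos_right this (by positivity)]
  set x₁ := -1 + k ^ 2 / u ^ 2 with hx₁
  set x₂ := t - k ^ 2 * a ^ 2 / u ^ 2 with hx₂
  have hd₁ : 0 < k ^ 2 / u ^ 2 := by positivity
  have hd₂ : 0 < k ^ 2 * a ^ 2 / u ^ 2 := by positivity
  have hx₁₂ : x₁ ≤ x₂ := by linarith
  have hr₁ : √(1 + x₁) = k / u := by
    rw [hx₁, show 1 + (-1 + k ^ 2 / u ^ 2) = (k / u) ^ 2 by ring, Real.sqrt_sq (by positivity)]
  have hs₂ : √(t - x₂) = k * a / u := by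
    rw [hx₂, show t - (t - k ^ 2 * a ^ 2 / u ^ 2) = (k * a / u) ^ 2 by ring,
      Real.sqrt_sq (by positivity)]
  have hs₁sq : √(t - x₁) ^ 2 = t - x₁ := Real.sq_sqrt (by linarith)
  have hr₂sq : √(1 + x₂) ^ 2 = 1 + x₂ := Real.sq_sqrt (by linarith)
  have hs₁nn := Real.sqrt_nonneg (t - x₁)
  have hr₂nn := Real.sqrt_nonneg (1 + x₂)
  have hm₁ : jacobiFreq u t x₁ = k * √(t - x₁) := by
    rw [jacobiFreq, hr₁]
    field_simp
  have hm₂ : jacobiFreq u t x₂ = k * √(1 + x₂) * a := by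
    rw [jacobiFreq, hs₂]
    field_simp
  have hγdef₁ : jacobiFreqSlope u t x₁ =
      (1 - x₁) * (t - 1 - 2 * x₁) / (2 * (k * √(t - x₁) ^ 3)) := by
    rw [jacobiFreqSlope, hr₁]
    field_simp
  have hγdef₂ : jacobiFreqSlope u t x₂ =
      (1 - x₂) * (t - 1 - 2 * x₂) / (2 * √(1 + x₂) * (k ^ 3 * a ^ 3 / u ^ 2)) := by
    rw [jacobiFreqSlope, hs₂]
    field_simp
  generalize √(t - x₁) = s at *
  generalize √(1 + x₂) = r at *
  have hks : 2 ≤ k * s := by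
    refine le_of_sq_le_sq (by rw [mul_pow]; nlinarith) (by positivity)
  have hkr : 2 ≤ k * r := by
    refine le_of_sq_le_sq (by rw [mul_pow]; nlinarith) (by positivity)
  have hs₂' : s ≤ 3 / 2 := le_of_sq_le_sq (by norm_num; linarith) (by norm_num)
  have hr₂' : r ≤ 3 / 2 := le_of_sq_le_sq (by norm_num; linarith) (by norm_num)
  have hs₀ : 0 < s := pos_of_mul_pos_right (by linarith : 0 < k * s) hk₀.le
  have hr₀ : 0 < r := pos_of_mul_pos_right (by linarith : 0 < k * r) hk₀.le
  have hγ₁ : jacobiFreqSlope u t x₁ ≤ 1 := by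
    rw [hγdef₁, div_le_one (by positivity)]
    have h₁ : (1 - x₁) * (t - 1 - 2 * x₁) ≤ 2 * s ^ 2 := by
      exact mul_le_mul (by linarith) (by linarith) (by linarith) (by norm_num)
    have h₂ : 2 * s ^ 2 ≤ k * s * s ^ 2 := by gcongr
    linarith
  have hγ₂ : -1 ≤ jacobiFreqSlope u t x₂ := by
    rw [hγdef₂, le_div_iff₀ (by positivity)]
    have h₁ : 1 - x₂ ≤ (1 / 2 + k ^ 2) * (a ^ 3 / u ^ 2) := by
      have e₁ : a ^ 3 / u ^ 2 = 2 * (1 - t) := by rw [hat]; field_simp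
      have e₂ : k ^ 2 * a ^ 2 / u ^ 2 ≤ k ^ 2 * (a ^ 3 / u ^ 2) := by
        rw [mul_div_assoc]
        have : a ^ 2 ≤ a ^ 3 := pow_le_pow_right₀ ha (by norm_num)
        gcongr
      linarith
    have h₂ : (1 - x₂) * (1 + x₂ - (t - x₂)) ≤ (1 - x₂) * r ^ 2 := by
      rw [hr₂sq]
      gcongr <;> linarith
    have h₃ : (1 - x₂) * r ^ 2 ≤ (1 / 2 + k ^ 2) * (a ^ 3 / u ^ 2) * r ^ 2 := by gcongr
    have h₄ : (1 / 2 + k ^ 2) * r ≤ 2 * k ^ 3 := by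
      have h₇ : (1 / 2 + k ^ 2) * r ≤ (1 / 2 + k ^ 2) * (3 / 2) := by gcongr
      have h₈ : k ^ 2 * 2 ≤ k ^ 2 * k := by gcongr
      nlinarith
    have h₅ : (1 / 2 + k ^ 2) * r * (a ^ 3 / u ^ 2 * r) ≤ 2 * k ^ 3 * (a ^ 3 / u ^ 2 * r) := by
      gcongr
    have h₆ : 2 * r * (k ^ 3 * a ^ 3 / u ^ 2) = 2 * k ^ 3 * (a ^ 3 / u ^ 2 * r) := by ring
    linarith
  have hI₁ : x₁ ∈ Set.Icc (-1 : ℝ) 1 := ⟨by linarith, by linarith⟩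
  have hI₂ : x₂ ∈ Set.Icc (-1 : ℝ) 1 := ⟨by linarith, by linarith⟩
  have hM : 0 ≤ M := (h.fst_nonneg x₁ hI₁).trans hXM
  have hosc : ∀ y ∈ Set.Icc x₁ x₂, jacobiFreq u t y * X y + Z y / jacobiFreq u t y ≤ A := by
    intro y hy
    refine (h.amplitude_le hu ht₁.le (by linarith) (by linarith) hγ₁ hγ₂ hy).trans ?_
    rw [hA]
    have hs : √(t - x₁) = s := by rw [← hs₁sq, Real.sqrt_sq hs₁nn]
    have h₀ : 0 ≤ jacobiFreq u t x₁ * X x₁ + Z x₁ / jacobiFreq u t x₁ := by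
      have hX' := h.fst_nonneg x₁ hI₁
      have hZ' := h.snd_nonneg x₁ hI₁
      rw [hm₁]
      positivity
    gcongr 3 * Real.exp (2 + ?_) * ?_
    · rw [hr₁, hs]
      calc (4 + 4 * β ^ 2) / (u * (1 + t)) * (s / (k / u))
          = (4 + 4 * β ^ 2) / (1 + t) * (s / k) := by
            have : 1 + t ≠ 0 := by linarith
            field_simp
        _ ≤ (4 + 4 * β ^ 2) / δ * 1 := by
            gcongr
            rw [div_le_one hk₀]
            linarith
        _ = _ := mul_one _
    · rw [hm₁]
      have h₁ : k * s * X x₁ ≤ k * 2 * M := by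
        have := h.fst_nonneg x₁ hI₁
        gcongr
        linarith
      have h₂ : Z x₁ / (k * s) ≤ M := by
        exact (div_le_self (h.snd_nonneg x₁ hI₁) (by linarith)).trans hZM
      linarith
  have htrans : ∀ y ∈ Set.Icc x₂ t, a * X y + Z y / a ≤ S := by
    intro y hy
    refine (h.transition_le hu ha hat (sq_nonneg k) hδ (by linarith) hy).trans ?_
    rw [hS]
    gcongr
    have h₁ := hosc x₂ ⟨hx₁₂, le_rfl⟩
    rw [hm₂] at h₁
    have h₂ : a * X x₂ ≤ 2 * k * (k * r * a * X x₂) := by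
      have : 0 ≤ a * X x₂ := mul_nonneg ha₀.le (h.fst_nonneg x₂ hI₂)
      have : 1 ≤ 2 * k * (k * r) := by nlinarith
      linarith [le_mul_of_one_le_left ‹0 ≤ a * X x₂› this]
    have h₃ : Z x₂ / a ≤ 2 * k * (Z x₂ / (k * r * a)) := by
      have hz : 0 ≤ Z x₂ := h.snd_nonneg x₂ hI₂
      rw [show 2 * k * (Z x₂ / (k * r * a)) = 2 / r * (Z x₂ / a) by field_simp]
      exact le_mul_of_one_le_left (by positivity) ((one_le_div hr₀).2 (by linarith))
    calc a * X x₂ + Z x₂ / a ≤ 2 * k * (k * r * a * X x₂ + Z x₂ / (k * r * a)) := by linarith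
      _ ≤ 2 * k * A := by gcongr
  have hxI : x ∈ Set.Icc (-1 : ℝ) 1 := ⟨by linarith [hx.1], hx.2⟩
  have hXx := h.fst_nonneg x hxI
  have hZx := h.snd_nonneg x hxI
  have hC₁ : 0 ≤ 2 * A ^ 2 / ε := by positivity
  have hC₂ : 0 ≤ (k ^ 2 + 1) * S ^ 2 := by positivity
  have hC₃ : 0 ≤ S ^ 2 * (1 + 1 / δ) := by positivity
  rcases le_total x x₂ with hxx | hxx
  · have h₁ := hosc x ⟨by linarith [hx.1], hxx⟩
    have hm : jacobiFreq u t x ^ 2 = u ^ 2 * (1 + x) * (t - x) := by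
      rw [jacobiFreq, mul_pow, mul_pow, Real.sq_sqrt (by linarith [hx.1]),
        Real.sq_sqrt (by linarith)]
    have hm₀ : 0 ≤ jacobiFreq u t x := by unfold jacobiFreq; positivity
    have h₂ : jacobiFreq u t x * X x ≤ A := by
      linarith [div_nonneg hZx hm₀]
    have h₃ : (jacobiFreq u t x * X x) ^ 2 ≤ A ^ 2 := pow_le_pow_left₀ (by positivity) h₂ 2
    rw [mul_pow, hm] at h₃
    have h₄ : X x ^ 2 * (u ^ 2 * (t - x)) ≤ A ^ 2 / ε := by
      rw [le_div_iff₀ hε]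
      refine le_trans ?_ h₃
      have : 0 ≤ u ^ 2 * (t - x) * X x ^ 2 := by
        have : 0 ≤ t - x := by linarith
        positivity
      linarith [mul_le_mul_of_nonneg_right (by linarith [hx.1] : ε ≤ 1 + x) this]
    have h₅ : a ^ 2 ≤ u ^ 2 * (t - x) := by
      have h₆ : u ^ 2 * (k ^ 2 * a ^ 2 / u ^ 2) ≤ u ^ 2 * (t - x) := by gcongr; linarith
      rw [mul_div_cancel₀ _ (by positivity)] at h₆
      refine le_trans ?_ h₆
      exact le_mul_of_one_le_left (sq_nonneg a) (one_le_pow₀ (by linarith))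
    rw [abs_of_nonpos (by linarith)]
    have h₆ : X x ^ 2 * a ^ 2 ≤ X x ^ 2 * (u ^ 2 * (t - x)) := by gcongr
    have h₇ : 2 * A ^ 2 / ε = 2 * (A ^ 2 / ε) := by ring
    linarith
  rcases le_total x t with hxt | hxt
  · have h₁ := htrans x ⟨hxx, hxt⟩
    have h₂ : a * X x ≤ S := by linarith [div_nonneg hZx ha₀.le]
    have h₃ : (a * X x) ^ 2 ≤ S ^ 2 := pow_le_pow_left₀ (by positivity) h₂ 2
    have h₄ : u ^ 2 * |x - t| ≤ k ^ 2 * a ^ 2 := by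
      rw [abs_of_nonpos (by linarith)]
      calc u ^ 2 * -(x - t) ≤ u ^ 2 * (k ^ 2 * a ^ 2 / u ^ 2) := by gcongr; linarith
        _ = _ := by field_simp
    calc X x ^ 2 * (u ^ 2 * |x - t| + a ^ 2) ≤ X x ^ 2 * (k ^ 2 * a ^ 2 + a ^ 2) := by gcongr
      _ = (k ^ 2 + 1) * (a * X x) ^ 2 := by ring
      _ ≤ (k ^ 2 + 1) * S ^ 2 := by gcongr
      _ ≤ _ := by linarith
  · have htI : t ∈ Set.Icc (-1 : ℝ) 1 := ⟨by linarith, ht₁.le⟩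
    obtain ⟨h₁, h₂⟩ := h.decay hX hY hZ hX₁ hY₁ hZ₁ (by linarith)
      (huβ.trans (by gcongr)) ⟨hxt, hx.2⟩
    have h₃ := htrans t ⟨by linarith, le_rfl⟩
    have h₄ := h.fst_nonneg t htI
    have h₅ := div_nonneg (h.snd_nonneg t htI) ha₀.le
    have h₆ := h.two_mul_abs_le htI ha₀
    have h₇ : (a * X x) ^ 2 ≤ S ^ 2 := by
      refine pow_le_pow_left₀ (by positivity) ?_ 2
      linarith [mul_le_mul_of_nonneg_left h₁ ha₀.le]
    have h₈ : Y t ^ 2 ≤ S ^ 2 := by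
      rw [← sq_abs]
      refine pow_le_pow_left₀ (abs_nonneg _) ?_ 2
      linarith [abs_nonneg (Y t)]
    have h₉ : X x ^ 2 * (u ^ 2 * (x - t)) ≤ S ^ 2 / δ := by
      rw [le_div_iff₀ hδ]
      refine le_trans ?_ (h₂.trans h₈)
      have : 0 ≤ X x ^ 2 * (u ^ 2 * (x - t)) := by
        have : 0 ≤ x - t := by linarith
        positivity
      linarith [mul_le_mul_of_nonneg_left ht this]
    rw [abs_of_nonneg (by linarith)]
    have : S ^ 2 * (1 + 1 / δ) = S ^ 2 + S ^ 2 / δ := by ring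
    linarith [mul_pow a (X x) 2]

/-- The Jacobi weight normalised on `[-1, 1]`. -/
noncomputable def jacobiWeight (a b : ℕ) (x : ℝ) : ℝ := ((1 - x) / 2) ^ a * ((1 + x) / 2) ^ b

lemma hasDerivAt_jacobiWeight (a b : ℕ) {x : ℝ} (hx : x ∈ Set.Ioo (-1 : ℝ) 1) :
    HasDerivAt (jacobiWeight a b)
      (jacobiWeight a b x * (b * (1 - x) - a * (1 + x)) / (1 - x ^ 2)) x := by
  have hA : HasDerivAt (fun x : ℝ => (1 - x) / 2) (-1 / 2) x :=
    ((hasDerivAt_id x).const_sub 1).div_const 2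
  have hB : HasDerivAt (fun x : ℝ => (1 + x) / 2) (1 / 2) x :=
    ((hasDerivAt_id x).const_add 1).div_const 2
  have hp : ∀ (j : ℕ) (y : ℝ), y * ((j : ℝ) * y ^ (j - 1)) = j * y ^ j := by
    intro j y
    rcases j with _ | j
    · simp
    · rw [Nat.add_sub_cancel]; ring
  have h₁ := hp a ((1 - x) / 2)
  have h₂ := hp b ((1 + x) / 2)
  have hx' : 1 - x ^ 2 ≠ 0 := by nlinarith [hx.1, hx.2]
  refine ((hA.fun_pow a).fun_mul (hB.fun_pow b)).congr_deriv ?_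
  rw [jacobiWeight, eq_div_iff hx']
  linear_combination -(1 + x) * ((1 + x) / 2) ^ b * h₁ + (1 - x) * ((1 - x) / 2) ^ a * h₂

/-- The numerator of `(1 - x²) d/dx` applied to the Jacobi function `√(weight) * P`. -/
noncomputable def jacobiFlux (α β : ℝ) (n : ℕ) (x : ℝ) : ℝ :=
  (β * (1 - x) - α * (1 + x)) / 2 * jacobi α β n x + (1 - x ^ 2) * jacobiDeriv α β n x

lemma hasDerivAt_jacobiFlux (α β : ℝ) (n : ℕ) (x : ℝ) :
    HasDerivAt (jacobiFlux α β n)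
      ((-(α + β) / 2 - n * (n + α + β + 1)) * jacobi α β n x
        - (β * (1 - x) - α * (1 + x)) / 2 * jacobiDeriv α β n x) x := by
  have h₁ : HasDerivAt (fun x : ℝ => (β * (1 - x) - α * (1 + x)) / 2)
      ((β * -1 - α * 1) / 2) x :=
    ((((hasDerivAt_id x).const_sub 1).const_mul β).sub
      (((hasDerivAt_id x).const_add 1).const_mul α)).div_const 2
  have h₂ : HasDerivAt (fun x : ℝ => 1 - x ^ 2) (-(2 * x)) x := by
    simpa using (hasDerivAt_pow 2 x).const_sub 1
  refine ((h₁.mul (hasDerivAt_jacobi α β n x)).add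
    (h₂.mul (hasDerivAt_jacobiDeriv α β n x))).congr_deriv ?_
  linear_combination jacobi_ode α β n x

lemma isEnergySystem_jacobi (a b n : ℕ) {u t : ℝ} (hu : u = n + ((a : ℝ) + b + 1) / 2)
    (ht : t = 1 - (a : ℝ) ^ 2 / (2 * u ^ 2)) :
    IsEnergySystem (jacobiPotential u t b)
      (fun x => jacobiWeight a b x * jacobi a b n x ^ 2)
      (fun x => jacobiWeight a b x * (jacobi a b n x * jacobiFlux a b n x))
      (fun x => jacobiWeight a b x * jacobiFlux a b n x ^ 2) := by
  have hu₀ : 0 < u := by rw [hu]; positivity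
  have hw : ∀ x ∈ Set.Icc (-1 : ℝ) 1, 0 ≤ jacobiWeight a b x := fun x hx =>
    mul_nonneg (pow_nonneg (by linarith [hx.2]) _) (pow_nonneg (by linarith [hx.1]) _)
  have hW : ∀ x, jacobiPotential u t b x =
      (1 - x ^ 2) * (n * (n + a + b + 1) + (a + b) / 2)
        - ((b * (1 - x) - a * (1 + x)) / 2) ^ 2 := by
    intro x
    have e : u ^ 2 * (1 + x) * (t - x) = u ^ 2 * (1 - x ^ 2) - a ^ 2 * (1 + x) / 2 := by
      rw [ht]
      field_simp
      ring
    rw [jacobiPotential, e, hu]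
    ring
  refine ⟨fun x hx => ?_, fun x hx => ?_, fun x hx => ?_,
    fun x hx => mul_nonneg (hw x hx) (sq_nonneg _),
    fun x hx => mul_nonneg (hw x hx) (sq_nonneg _), fun x => by ring⟩
  all_goals
    have hx' : 1 - x ^ 2 ≠ 0 := by nlinarith [hx.1, hx.2]
    have hd := hasDerivAt_jacobiWeight a b hx
    have hp := hasDerivAt_jacobi a b n x
    have hq := hasDerivAt_jacobiFlux a b n x
  · refine (hd.mul (hp.pow 2)).congr_deriv ?_
    simp only [Pi.pow_apply]
    rw [jacobiFlux]
    field_simp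
    ring
  · refine (hd.mul (hp.mul hq)).congr_deriv ?_
    rw [hW]
    simp only [Pi.mul_apply]
    rw [jacobiFlux]
    field_simp
    ring
  · refine (hd.mul (hq.pow 2)).congr_deriv ?_
    rw [hW]
    simp only [Pi.pow_apply]
    rw [jacobiFlux]
    field_simp
    ring

/-- A Sonin-type bound for the Jacobi polynomial near the endpoint `-1`. -/
lemma jacobi_sonin_le (α β : ℝ) (n : ℕ) (hαβ : 0 ≤ α + β + 1) {x : ℝ}
    (hx₁ : -1 ≤ x) (hx : α - β + (α + β + 1) * x ≤ 0) :
    n * (n + α + β + 1) * jacobi α β n x ^ 2 + (1 - x ^ 2) * jacobiDeriv α β n x ^ 2 ≤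
      n * (n + α + β + 1) * jacobi α β n (-1) ^ 2 := by
  have hd : ∀ y, HasDerivAt (fun y => n * (n + α + β + 1) * jacobi α β n y ^ 2 +
      (1 - y ^ 2) * jacobiDeriv α β n y ^ 2)
      (2 * jacobiDeriv α β n y ^ 2 * (α - β + (α + β + 1) * y)) y := by
    intro y
    have h₂ : HasDerivAt (fun x : ℝ => 1 - x ^ 2) (-(2 * y)) y := by
      simpa using (hasDerivAt_pow 2 y).const_sub 1
    refine ((((hasDerivAt_jacobi α β n y).fun_pow 2).const_mul (n * (n + α + β + 1))).add
      (h₂.mul ((hasDerivAt_jacobiDeriv α β n y).fun_pow 2))).congr_deriv ?_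
    norm_num
    linear_combination 2 * jacobiDeriv α β n y * jacobi_ode α β n y
  have := apply_right_le_of_deriv_nonpos hx₁
    (fun y _ => (hd y).continuousAt.continuousWithinAt) (fun y _ => hd y) (fun y hy => by
      refine mul_nonpos_of_nonneg_of_nonpos (by positivity) ?_
      linarith [mul_le_mul_of_nonneg_left hy.2.le hαβ])
  simpa using this

/-- Uniform bound for the Jacobi energies at distance `k² / u²` from the endpoint `-1`. -/
lemma jacobi_initial_le (a b n : ℕ) {u k : ℝ} (hu : u = n + ((a : ℝ) + b + 1) / 2) (hn : 1 ≤ n)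
    (hu₁ : 1 ≤ u) (hku : 2 * k ^ 2 ≤ u) {x : ℝ} (hx : x = -1 + k ^ 2 / u ^ 2) :
    jacobiWeight a b x * jacobi a b n x ^ 2 ≤ (2 * k ^ 2) ^ b ∧
    jacobiWeight a b x * jacobiFlux a b n x ^ 2 ≤
      (2 * k ^ 2) ^ b * (2 * (k ^ 2 + b) ^ 2 + 4 * k ^ 2) := by
  have hu₀ : 0 < u := by linarith
  have hn₀ : (1 : ℝ) ≤ n := by exact_mod_cast hn
  set p := k ^ 2 / u ^ 2 with hp
  have hp₀ : 0 ≤ p := by positivity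
  have hup : u * p ≤ 1 / 2 := by
    rw [hp, sq u, ← div_div, mul_div_assoc', mul_div_cancel₀ _ hu₀.ne', div_le_iff₀ hu₀]
    linarith
  have hp₁ : p ≤ 1 / 2 := by nlinarith
  set c : ℝ := ((n + b).choose n : ℝ) with hc
  have hL : (0 : ℝ) < n * (n + a + b + 1) := by positivity
  have hLu : (n : ℝ) * (n + a + b + 1) ≤ u ^ 2 := by
    rw [hu]
    nlinarith [sq_nonneg ((a : ℝ) + b + 1)]
  have h₁ := jacobi_sonin_le a b n (by positivity) (x := x) (by linarith) (by
    have h₂ : ((a : ℝ) + b + 1) * p ≤ 2 * u * p := by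
      gcongr
      linarith
    rw [hx]
    linarith [(Nat.cast_nonneg b : (0 : ℝ) ≤ b)])
  have hj : jacobi a b n (-1) ^ 2 = c ^ 2 := by
    rw [jacobi_neg_one, mul_pow, ← pow_mul, mul_comm n 2, pow_mul]
    norm_num [hc]
  rw [hj] at h₁
  have hx₂ : 1 - x ^ 2 = p * (2 - p) := by rw [hx]; ring
  have hx₃ : 0 ≤ 1 - x ^ 2 := by rw [hx₂]; exact mul_nonneg hp₀ (by linarith)
  have hP : jacobi a b n x ^ 2 ≤ c ^ 2 := by
    refine le_of_mul_le_mul_left ?_ hL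
    linarith [mul_nonneg hx₃ (sq_nonneg (jacobiDeriv a b n x))]
  have hD : ((1 - x ^ 2) * jacobiDeriv a b n x) ^ 2 ≤ 2 * k ^ 2 * c ^ 2 := by
    calc ((1 - x ^ 2) * jacobiDeriv a b n x) ^ 2
        = (1 - x ^ 2) * ((1 - x ^ 2) * jacobiDeriv a b n x ^ 2) := by ring
      _ ≤ (2 * p) * (u ^ 2 * c ^ 2) := by
          refine mul_le_mul (by rw [hx₂]; nlinarith) ?_
            (mul_nonneg hx₃ (sq_nonneg _)) (by positivity)
          have h₂ := mul_le_mul_of_nonneg_right hLu (sq_nonneg c)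
          linarith [mul_nonneg hL.le (sq_nonneg (jacobi a b n x))]
      _ = 2 * k ^ 2 * c ^ 2 := by rw [hp]; field_simp
  have hF : jacobiFlux a b n x ^ 2 ≤ (2 * (k ^ 2 + b) ^ 2 + 4 * k ^ 2) * c ^ 2 := by
    set l : ℝ := (b * (1 - x) - a * (1 + x)) / 2 with hl
    have hl₁ : l ^ 2 ≤ (k ^ 2 + b) ^ 2 := by
      have h₂ : (a : ℝ) * p ≤ 2 * k ^ 2 := by
        calc (a : ℝ) * p ≤ 2 * u ^ 2 * p := by
              gcongr
              rw [hu] at hu₁ ⊢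
              nlinarith
          _ = 2 * k ^ 2 := by rw [hp]; field_simp
      have h₃ : 0 ≤ (a : ℝ) * p := by positivity
      have h₄ : 0 ≤ (b : ℝ) * p := by positivity
      have h₅ : (b : ℝ) * p ≤ b * (1 / 2) := by gcongr
      rw [sq_le_sq, abs_of_nonneg (by positivity : 0 ≤ k ^ 2 + b), abs_le, hl, hx]
      constructor <;> linarith [sq_nonneg k]
    have h₂ : (l * jacobi a b n x) ^ 2 ≤ (k ^ 2 + b) ^ 2 * c ^ 2 := by
      rw [mul_pow]
      gcongr
    rw [jacobiFlux]
    refine (add_sq_le (a := l * jacobi a b n x)).trans ?_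
    linarith
  have hw₀ : 0 ≤ jacobiWeight a b x :=
    mul_nonneg (pow_nonneg (by linarith) _) (pow_nonneg (by linarith) _)
  have hw : jacobiWeight a b x * c ^ 2 ≤ (2 * k ^ 2) ^ b := by
    have h₂ : jacobiWeight a b x ≤ (p / 2) ^ b := by
      rw [jacobiWeight, show (1 + x) / 2 = p / 2 by rw [hx]; ring]
      exact mul_le_of_le_one_left (by positivity) (pow_le_one₀ (by linarith) (by linarith))
    have h₃ : c ≤ (2 * u) ^ b := by
      rw [hc, Nat.choose_symm_add]
      calc ((n + b).choose b : ℝ) ≤ ((n + b : ℕ) : ℝ) ^ b := by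
            exact_mod_cast Nat.choose_le_pow _ _
        _ ≤ (2 * u) ^ b := by
            gcongr
            push_cast
            linarith [(Nat.cast_nonneg a : (0 : ℝ) ≤ a)]
    calc jacobiWeight a b x * c ^ 2 ≤ (p / 2) ^ b * ((2 * u) ^ b) ^ 2 := by gcongr
      _ = (p / 2 * (2 * u) ^ 2) ^ b := by rw [pow_right_comm, ← mul_pow]
      _ = (2 * k ^ 2) ^ b := by
          congr 1
          rw [hp]
          field_simp
  constructor
  · exact (mul_le_mul_of_nonneg_left hP hw₀).trans hw
  · calc jacobiWeight a b x * jacobiFlux a b n x ^ 2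
        ≤ jacobiWeight a b x * ((2 * (k ^ 2 + b) ^ 2 + 4 * k ^ 2) * c ^ 2) := by gcongr
      _ = jacobiWeight a b x * c ^ 2 * (2 * (k ^ 2 + b) ^ 2 + 4 * k ^ 2) := by ring
      _ ≤ _ := by gcongr

lemma continuous_jacobi (α β : ℝ) (n : ℕ) : Continuous (jacobi α β n) :=
  continuous_iff_continuousAt.2 fun x => (hasDerivAt_jacobi α β n x).continuousAt

lemma continuous_jacobiFlux (α β : ℝ) (n : ℕ) : Continuous (jacobiFlux α β n) :=
  continuous_iff_continuousAt.2 fun x => (hasDerivAt_jacobiFlux α β n x).continuousAt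

lemma continuous_jacobiWeight (a b : ℕ) : Continuous (jacobiWeight a b) := by
  unfold jacobiWeight
  fun_prop

set_option maxHeartbeats 1000000 in
/-- The uniform bound for all sufficiently large `u`. -/
lemma exists_forall_jacobiWeight_mul_sq_le (b : ℕ) {ε c : ℝ} (hε : 0 < ε) (hc : 0 < c) :
    ∃ U C : ℝ, ∀ a n : ℕ, 1 ≤ a → (a : ℝ) ≤ c * (1 + n) →
      ∀ u : ℝ, u = n + ((a : ℝ) + b + 1) / 2 → U ≤ u → ∀ x ∈ Set.Icc (-1 + ε) (1 : ℝ),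
        (jacobiWeight a b x * jacobi a b n x ^ 2) ^ 2 *
          (u ^ 2 * |x - (1 - (a : ℝ) ^ 2 / (2 * u ^ 2))| + (a : ℝ) ^ ((4 : ℝ) / 3)) ≤ C := by
  set q : ℝ := 2 * c / (1 + c) with hq
  have hq₀ : 0 < q := by positivity
  have hq₂ : q < 2 := by
    rw [hq, div_lt_iff₀ (by positivity)]
    linarith
  obtain ⟨δ, hδq⟩ : ∃ δ : ℝ, δ = 2 - q ^ 2 / 2 := ⟨_, rfl⟩
  have hδ : 0 < δ := by
    rw [hδq]
    nlinarith
  obtain ⟨k, hk⟩ : ∃ k : ℝ, k = 2 + 8 / δ := ⟨_, rfl⟩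
  have hk₂ : 2 ≤ k := by
    rw [hk]
    have : 0 < 8 / δ := by positivity
    linarith
  have hkδ : 8 ≤ k ^ 2 * δ := by
    have h₁ : 8 ≤ k * δ := by
      rw [hk, add_mul, div_mul_cancel₀ _ hδ.ne']
      linarith
    nlinarith
  obtain ⟨M, hM⟩ : ∃ M : ℝ, M = (2 * k ^ 2) ^ b * (1 + (2 * (k ^ 2 + b) ^ 2 + 4 * k ^ 2)) :=
    ⟨_, rfl⟩
  obtain ⟨A, hA⟩ : ∃ A : ℝ, A = 3 * Real.exp (2 + (4 + 4 * (b : ℝ) ^ 2) / δ) *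
    ((2 * k + 1) * M) := ⟨_, rfl⟩
  obtain ⟨S, hS⟩ : ∃ S : ℝ, S = Real.exp (4 * k ^ 2 * (2 + 2 * k ^ 2 + (b : ℝ) ^ 2) / δ) *
    (2 * k * A) := ⟨_, rfl⟩
  have h₀ : 0 < 2 * k ^ 2 := by positivity
  have h₁ : 0 < (1 + (b : ℝ) ^ 2) / δ := by positivity
  have h₂ : 0 < 2 * k ^ 2 / δ := by positivity
  have h₃ : 0 < k ^ 2 / ε := by positivity
  have h₄ : 0 < 128 * k ^ 6 / δ ^ 3 := by positivity
  have hb₀ : (0 : ℝ) ≤ b := Nat.cast_nonneg b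
  refine ⟨c + b + 2 + 2 * k ^ 2 + (1 + (b : ℝ) ^ 2) / δ + 2 * k ^ 2 / δ + k ^ 2 / ε +
    128 * k ^ 6 / δ ^ 3, 2 * A ^ 2 / ε + (k ^ 2 + 1) * S ^ 2 + S ^ 2 * (1 + 1 / δ),
    fun a n ha hac u hu hU x hx => ?_⟩
  have ha₁ : (1 : ℝ) ≤ a := by exact_mod_cast ha
  have hn₀ : (0 : ℝ) ≤ n := Nat.cast_nonneg n
  have hn : 1 ≤ n := by
    by_contra! hn
    obtain rfl : n = 0 := by omega
    simp only [Nat.cast_zero] at hu hac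
    linarith
  have hu₁ : 1 ≤ u := by linarith
  have hu₀ : 0 < u := by linarith
  have huu : u ≤ u ^ 2 := by nlinarith
  have haq : (a : ℝ) ≤ q * u := by
    rw [hq, div_mul_eq_mul_div, le_div_iff₀ (by positivity), hu]
    nlinarith
  have ha₂ : (a : ℝ) ^ 2 ≤ q ^ 2 * u ^ 2 := by
    rw [← mul_pow]
    gcongr
  have ha₄ : (a : ℝ) ^ 2 ≤ 4 * u ^ 2 := by nlinarith
  obtain ⟨t, ht⟩ : ∃ t : ℝ, t = 1 - (a : ℝ) ^ 2 / (2 * u ^ 2) := ⟨_, rfl⟩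
  obtain ⟨r, hr⟩ : ∃ r : ℝ, r = (a : ℝ) ^ ((2 : ℝ) / 3) := ⟨_, rfl⟩
  have hr₁ : 1 ≤ r := hr ▸ Real.one_le_rpow ha₁ (by norm_num)
  have hr₃ : r ^ 3 = (a : ℝ) ^ 2 := by
    rw [hr, ← Real.rpow_mul_natCast (by positivity), ← Real.rpow_natCast]
    norm_num
  have hr₂ : (a : ℝ) ^ ((4 : ℝ) / 3) = r ^ 2 := by
    rw [hr, ← Real.rpow_mul_natCast (by positivity)]
    norm_num
  have hδt : δ ≤ 1 + t := by
    have : (a : ℝ) ^ 2 / (2 * u ^ 2) ≤ q ^ 2 / 2 := by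
      rw [div_le_iff₀ (by positivity)]
      linarith
    linarith
  have hkr : k ^ 2 * r ^ 2 / u ^ 2 ≤ δ / 2 := by
    refine (pow_le_pow_iff_left₀ (by positivity) (by positivity) three_ne_zero).1 ?_
    calc (k ^ 2 * r ^ 2 / u ^ 2) ^ 3 = k ^ 6 * (r ^ 3) ^ 2 / u ^ 6 := by ring
      _ ≤ k ^ 6 * (4 * u ^ 2) ^ 2 / u ^ 6 := by
          rw [hr₃]
          gcongr
      _ = 16 * k ^ 6 / u ^ 2 := by
          field_simp
          norm_num
      _ ≤ (δ / 2) ^ 3 := by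
          rw [div_le_iff₀ (by positivity)]
          have h₅ : 128 * k ^ 6 / δ ^ 3 ≤ u ^ 2 := by linarith
          rw [div_le_iff₀ (by positivity)] at h₅
          linarith
  have hi := jacobi_initial_le a b n (k := k) hu hn hu₁ (by linarith) rfl
  have hw : jacobiWeight a b 1 = 0 := by simp [jacobiWeight, show a ≠ 0 by omega]
  have hcW := continuous_jacobiWeight a b
  have hcP := continuous_jacobi a b n
  have hcF := continuous_jacobiFlux a b n
  rw [← ht, hr₂]
  refine (isEnergySystem_jacobi a b n hu ht).sq_mul_le (a := r) (M := M)
    (hcW.mul (hcP.pow 2)) (hcW.mul (hcP.mul hcF)) (hcW.mul (hcF.pow 2))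
    (by simp [hw]) (by simp [hw]) (by simp [hw]) hu₀ hr₁ ?_ hk₂ hδ hkδ hε hδt ?_ ?_ hkr ?_
    ?_ ?_ hA hS hx
  · rw [hr₃, ht]
    field_simp
    ring
  · have h₅ : (1 + (b : ℝ) ^ 2) / δ ≤ u ^ 2 := by linarith
    rw [div_le_iff₀ hδ] at h₅
    linarith [sq_nonneg (b : ℝ)]
  · have h₅ : 2 * k ^ 2 / δ ≤ u ^ 2 := by linarith
    rw [div_le_iff₀ hδ] at h₅
    rw [div_le_iff₀ (by positivity)]
    linarith
  · have h₅ : k ^ 2 / ε ≤ u ^ 2 := by linarith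
    rw [div_le_iff₀ hε] at h₅
    rw [div_le_iff₀ (by positivity)]
    linarith
  · refine hi.1.trans ?_
    rw [hM]
    exact le_mul_of_one_le_right (by positivity) (le_add_of_nonneg_right (by positivity))
  · refine hi.2.trans ?_
    rw [hM]
    exact mul_le_mul_of_nonneg_left (le_add_of_nonneg_left zero_le_one) (by positivity)

/-- The fourth power of the Jacobi function is bounded uniformly over all admissible indices. -/
lemma exists_forall_jacobi_sq_le (b : ℕ) {ε c : ℝ} (hε : 0 < ε) (hc : 0 < c) :
    ∃ C : ℝ, ∀ a n : ℕ, 1 ≤ a → (a : ℝ) ≤ c * (1 + n) →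
      ∀ u : ℝ, u = n + ((a : ℝ) + b + 1) / 2 → ∀ x ∈ Set.Icc (-1 + ε) (1 : ℝ),
        (((1 - x) / 2) ^ a * jacobi a b n x ^ 2) ^ 2 *
          (u ^ 2 * |x - (1 - (a : ℝ) ^ 2 / (2 * u ^ 2))| + (a : ℝ) ^ ((4 : ℝ) / 3)) ≤ C := by
  obtain ⟨U, C, hC⟩ := exists_forall_jacobiWeight_mul_sq_le b hε hc
  have hcomp : ∀ p : ℕ × ℕ, ∃ K : ℝ, ∀ u : ℝ, u = p.2 + ((p.1 : ℝ) + b + 1) / 2 →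
      ∀ x ∈ Set.Icc (-1 + ε) (1 : ℝ),
        (((1 - x) / 2) ^ p.1 * jacobi p.1 b p.2 x ^ 2) ^ 2 *
          (u ^ 2 * |x - (1 - (p.1 : ℝ) ^ 2 / (2 * u ^ 2))| + (p.1 : ℝ) ^ ((4 : ℝ) / 3)) ≤ K := by
    rintro ⟨a, n⟩
    have hcP := continuous_jacobi a b n
    obtain ⟨K, hK⟩ := isCompact_Icc.exists_bound_of_continuousOn (s := Set.Icc (-1 + ε) (1 : ℝ))
      (f := fun x => (((1 - x) / 2) ^ a * jacobi a b n x ^ 2) ^ 2 *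
        (((n : ℝ) + ((a : ℝ) + b + 1) / 2) ^ 2 *
          |x - (1 - (a : ℝ) ^ 2 / (2 * ((n : ℝ) + ((a : ℝ) + b + 1) / 2) ^ 2))| +
          (a : ℝ) ^ ((4 : ℝ) / 3)))
      (Continuous.continuousOn (by fun_prop))
    refine ⟨K, ?_⟩
    rintro u rfl x hx
    exact (le_abs_self _).trans (hK x hx)
  choose K hK using hcomp
  obtain ⟨B, hB⟩ := Finset.exists_le
    ((Finset.range (2 * ⌈U⌉₊) ×ˢ Finset.range ⌈U⌉₊).image K)
  refine ⟨max (C / ((ε / 2) ^ b) ^ 2) B, fun a n ha hac u hu x hx => ?_⟩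
  rcases le_or_gt U u with hU | hU
  · refine le_max_of_le_left ?_
    rw [le_div_iff₀ (by positivity)]
    refine le_trans ?_ (hC a n ha hac u hu hU x hx)
    have h₁ : (ε / 2) ^ b ≤ ((1 + x) / 2) ^ b := by
      gcongr
      linarith [hx.1]
    calc _ ≤ (((1 - x) / 2) ^ a * jacobi a b n x ^ 2) ^ 2 *
          (u ^ 2 * |x - (1 - (a : ℝ) ^ 2 / (2 * u ^ 2))| + (a : ℝ) ^ ((4 : ℝ) / 3)) *
            (((1 + x) / 2) ^ b) ^ 2 := by gcongr
      _ = _ := by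
          rw [jacobiWeight]
          ring
  · refine le_max_of_le_right ((hK (a, n) u hu x hx).trans (hB _ ?_))
    have h₁ := Nat.le_ceil U
    have hn₀ : (0 : ℝ) ≤ n := Nat.cast_nonneg n
    have ha₀ : (0 : ℝ) ≤ a := Nat.cast_nonneg a
    have hb₀ : (0 : ℝ) ≤ b := Nat.cast_nonneg b
    refine Finset.mem_image_of_mem K (Finset.mem_product.2
      ⟨Finset.mem_range.2 ?_, Finset.mem_range.2 ?_⟩)
    · rify
      linarith
    · rify
      linarith

lemma abs_le_rpow_mul_rpow_of_pow_mul_le {g R C : ℝ} (hR : 0 < R) (h : g ^ 4 * R ≤ C) :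
    |g| ≤ C ^ (1 / 4 : ℝ) * R ^ (-(1 / 4) : ℝ) := by
  have hC : 0 ≤ C := le_trans (by positivity) h
  have h₁ : |g| ^ 4 ≤ C / R := by
    rwa [le_div_iff₀ hR, Even.pow_abs (by decide)]
  calc |g| = (|g| ^ 4) ^ (1 / 4 : ℝ) := by
        rw [← Real.rpow_natCast, ← Real.rpow_mul (abs_nonneg g)]
        norm_num
    _ ≤ (C / R) ^ (1 / 4 : ℝ) := by gcongr
    _ = C ^ (1 / 4 : ℝ) * R ^ (-(1 / 4) : ℝ) := by
        rw [Real.div_rpow hC hR.le, Real.rpow_neg hR.le, div_eq_mul_inv]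

theorem stmt9 (β : ℕ) (ε : ℝ) (hε : ε ∈ Set.Ioo (0 : ℝ) 2) (c : ℝ) (hc : 0 < c) :
    ∃ C : ℝ, 0 < C ∧
      ∀ α n : ℕ, 1 ≤ α → (α : ℝ) ≤ c * (1 + (n : ℝ)) →
        ∀ x ∈ Set.Icc (-1 + ε) (1 : ℝ),
          |((1 - x) / 2) ^ ((α : ℝ) / 2) * jacobi (α : ℝ) (β : ℝ) n x|
            ≤ C * (((n : ℝ) + ((α : ℝ) + (β : ℝ) + 1) / 2) ^ 2 *
                    |x - (1 - (α : ℝ) ^ 2 / (2 * ((n : ℝ) + ((α : ℝ) + (β : ℝ) + 1) / 2) ^ 2))| +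
                  (α : ℝ) ^ ((4 : ℝ) / 3)) ^ (-(1 / 4) : ℝ) := by
  obtain ⟨K, hK⟩ := exists_forall_jacobi_sq_le β hε.1 hc
  refine ⟨(max K 1) ^ (1 / 4 : ℝ), by positivity, fun α n hα hαc x hx => ?_⟩
  have hα₀ : (0 : ℝ) < α := by exact_mod_cast hα
  refine abs_le_rpow_mul_rpow_of_pow_mul_le (by positivity) (le_max_of_le_left ?_)
  have hy : 0 ≤ (1 - x) / 2 := by linarith [hx.2]
  have hg : (((1 - x) / 2) ^ ((α : ℝ) / 2)) ^ 2 = ((1 - x) / 2) ^ α := by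
    rw [← Real.rpow_mul_natCast hy, ← Real.rpow_natCast]
    norm_num
  refine le_trans (le_of_eq ?_) (hK α n hα hαc _ rfl x hx)
  rw [← hg]
  ring
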